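/- Let (R, ν) be a normalized BV₀ pair on (−1,1) of class BV₊ on I = (a₋, a₊). For every f ∈ D^I_{R,ν}, the limits L₊(f) = lim_{t→a₊⁻} (T_{R,ν}f)(t) and L₋(f) = lim_{t→a₋⁺} (T_{R,ν}f)(t) exist, and the map sending f ∈ D^I_{R,ν} to the function g : [−1,1] → ℝ defined by g(t) = (T_{R,ν}f)(t) for t ∈ I, g(t) = (L₊(f)/a₊)·t for t ∈ [a₊,1], and g(t) = (L₋(f)/a₋)·t for t ∈ [−1,a₋], is a bijection from D^I_{R,ν} onto the set of all continuous functions g : [−1,1] → ℝ satisfying g(t) = (g(a₊)/a₊)·t for all t ∈ [a₊,1] and g(t) = (g(a₋)/a₋)·t for all t ∈ [−1,a₋]. -/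

import Mathlib

open MeasureTheory Set Filter Function Topology

/-- A normalized BV₀ pair on `(-1,1)`: a signed Borel measure, represented by its
mutually singular positive part `νp` and negative part `νm`, that is finite on compact
subsets of `(-1,1)`, gives no mass to `{0}` and lives on `(-1,1)`, together with a
function `R` satisfying the fundamental-theorem-of-calculus relations. -/
structure NormBV0 where
  R : ℝ → ℝ
  νp : Measure ℝ
  νm : Measure ℝ
  sing : νp.MutuallySingular νm
  supp_p : νp (Set.Ioo (-1 : ℝ) 1)ᶜ = 0
  supp_m : νm (Set.Ioo (-1 : ℝ) 1)ᶜ = 0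
  locfin_p : ∀ K : Set ℝ, IsCompact K → K ⊆ Set.Ioo (-1 : ℝ) 1 → νp K ≠ ⊤
  locfin_m : ∀ K : Set ℝ, IsCompact K → K ⊆ Set.Ioo (-1 : ℝ) 1 → νm K ≠ ⊤
  zero_p : νp {0} = 0
  zero_m : νm {0} = 0
  fund_pos : ∀ t ∈ Set.Ico (0 : ℝ) 1,
    R t = R 0 - ((∫ s in Set.Ioc (0 : ℝ) t, s ∂νp) - (∫ s in Set.Ioc (0 : ℝ) t, s ∂νm))
  fund_neg : ∀ t ∈ Set.Ioc (-1 : ℝ) 0,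
    R t = R 0 + ((∫ s in Set.Ico t (0 : ℝ), s ∂νp) - (∫ s in Set.Ico t (0 : ℝ), s ∂νm))

/-- The integral of `f` over `S` with respect to the signed measure `νp - νm`. -/
noncomputable def NormBV0.integ (P : NormBV0) (S : Set ℝ) (f : ℝ → ℝ) : ℝ :=
  (∫ s in S, f s ∂P.νp) - (∫ s in S, f s ∂P.νm)

/-- The transform `T_{R,ν} f`. -/
noncomputable def NormBV0.T (P : NormBV0) (f : ℝ → ℝ) (t : ℝ) : ℝ :=
  if 0 < t then P.R t * f t + t * P.integ (Set.Ioc 0 t) f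
  else P.R t * f t - t * P.integ (Set.Ico t 0) f

/-- The pair `(R,ν)` is of class `BV₊` on the subinterval `I = (am, ap)`:
`|ν|((-1,1)) < ∞`, `R > 0` on `I`, and `ν` or `-ν` is nonnegative. -/
def NormBV0.BVplusOn (P : NormBV0) (am ap : ℝ) : Prop :=
  P.νp (Set.Ioo (-1 : ℝ) 1) ≠ ⊤ ∧ P.νm (Set.Ioo (-1 : ℝ) 1) ≠ ⊤ ∧
  (∀ t ∈ Set.Ioo am ap, 0 < P.R t) ∧ (P.νm = 0 ∨ P.νp = 0)

/-- The class `D^I_{R,ν}` of continuous functions on `I = (am, ap)` whose four boundary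
limits exist. -/
def NormBV0.memDI (P : NormBV0) (am ap : ℝ) (f : ℝ → ℝ) : Prop :=
  ContinuousOn f (Set.Ioo am ap) ∧
  (∃ L : ℝ, Tendsto (fun t => P.R t * f t) (𝓝[<] ap) (𝓝 L)) ∧
  (∃ L : ℝ, Tendsto (fun t => P.R t * f t) (𝓝[>] am) (𝓝 L)) ∧
  (∃ L : ℝ, Tendsto (fun t => P.integ (Set.Ioc 0 t) f) (𝓝[<] ap) (𝓝 L)) ∧
  (∃ L : ℝ, Tendsto (fun t => P.integ (Set.Ico t 0) f) (𝓝[>] am) (𝓝 L))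

/-- Integration by parts for the primitives of two integrable functions. -/
theorem integral_mul_integral_eq_add (m : Measure ℝ) [IsFiniteMeasure m] {u v : ℝ → ℝ}
    (hu : Integrable u m) (hv : Integrable v m) :
    Integrable (fun y => (∫ x in Iio y, u x ∂m) * v y) m ∧
    Integrable (fun x => u x * ∫ y in Iic x, v y ∂m) m ∧
    (∫ x, u x ∂m) * (∫ y, v y ∂m) =
      (∫ y, (∫ x in Iio y, u x ∂m) * v y ∂m) + ∫ x, u x * (∫ y in Iic x, v y ∂m) ∂m := by
  have hprod : Integrable (fun z : ℝ × ℝ => u z.1 * v z.2) (m.prod m) := hu.mul_prod hv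
  have hS : MeasurableSet {z : ℝ × ℝ | z.1 < z.2} := measurableSet_lt measurable_fst measurable_snd
  have h1 := hprod.indicator hS
  have h2 := hprod.indicator hS.compl
  have e1 : (fun y => ∫ x, {z : ℝ × ℝ | z.1 < z.2}.indicator (fun z => u z.1 * v z.2) (x, y) ∂m)
      = fun y => (∫ x in Iio y, u x ∂m) * v y := by
    funext y
    rw [← integral_mul_const, ← integral_indicator measurableSet_Iio]
    congr 1
  have e2 : (fun x => ∫ y, {z : ℝ × ℝ | z.1 < z.2}ᶜ.indicator (fun z => u z.1 * v z.2) (x, y) ∂m)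
      = fun x => u x * (∫ y in Iic x, v y ∂m) := by
    funext x
    rw [← integral_const_mul, ← integral_indicator measurableSet_Iic]
    congr 1
    funext y
    simp only [indicator, mem_compl_iff, mem_ofPred_eq, not_lt, mem_Iic]
  refine ⟨e1 ▸ h1.integral_prod_right, e2 ▸ h2.integral_prod_left, ?_⟩
  rw [← integral_prod_mul, ← e1, ← e2, ← integral_prod_symm _ h1, ← integral_prod _ h2,
    ← integral_add h1 h2]
  congr 1
  funext z
  exact (indicator_self_add_compl_apply _ (fun z : ℝ × ℝ => u z.1 * v z.2) z).symm

theorem exists_measureReal_Ioo_le (μ : Measure ℝ) [IsFiniteMeasure μ] (x : ℝ) {ε : ℝ}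
    (hε : 0 < ε) : ∃ y, x < y ∧ μ.real (Ioo x y) ≤ ε := by
  have h : Tendsto (fun n : ℕ => μ (Ioo x (x + 1 / ((n : ℝ) + 1)))) atTop
      (𝓝 (μ (⋂ n : ℕ, Ioo x (x + 1 / ((n : ℝ) + 1))))) := by
    refine tendsto_measure_iInter_atTop (fun n => measurableSet_Ioo.nullMeasurableSet) ?_
      ⟨0, measure_ne_top _ _⟩
    intro i j hij
    refine Ioo_subset_Ioo_right ?_
    have : (1 : ℝ) / ((j : ℝ) + 1) ≤ 1 / ((i : ℝ) + 1) := Nat.one_div_le_one_div hij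
    linarith
  have hempty : (⋂ n : ℕ, Ioo x (x + 1 / ((n : ℝ) + 1))) = ∅ := by
    refine eq_empty_iff_forall_notMem.2 fun z hz => ?_
    rw [mem_iInter] at hz
    obtain ⟨n, hn⟩ := exists_nat_one_div_lt (sub_pos.2 (hz 0).1)
    have := (hz n).2
    linarith
  rw [hempty, measure_empty] at h
  obtain ⟨n, hn⟩ := ((tendsto_order.1 h).2 (ENNReal.ofReal ε) (by simpa using hε)).exists
  refine ⟨x + 1 / ((n : ℝ) + 1), ?_, ?_⟩
  · have : (0 : ℝ) < 1 / ((n : ℝ) + 1) := Nat.one_div_pos_of_nat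
    linarith
  · exact ENNReal.toReal_le_of_le_ofReal hε.le hn.le

/-- A Grönwall-type uniqueness principle for a finite measure on the half-line. -/
theorem eq_zero_of_abs_le_integral_Iio (μ : Measure ℝ) [IsFiniteMeasure μ] (hμ : μ (Iic 0) = 0)
    {w : ℝ → ℝ} {b C K : ℝ} (hC : 0 ≤ C) (hK : ∀ t ≤ b, |w t| ≤ K)
    (hw : ∀ t ≤ b, |w t| ≤ C * ∫ s in Iio t, |w s| ∂μ) : ∀ t ≤ b, w t = 0 := by
  by_contra! hcon
  obtain ⟨t₀, ht₀, hwt₀⟩ := hcon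
  set Z : Set ℝ := {t | t ≤ b ∧ w t ≠ 0} with hZ
  have hZne : Z.Nonempty := ⟨t₀, ht₀, hwt₀⟩
  have hZbdd : BddBelow Z := by
    refine ⟨0, fun t ht => ?_⟩
    by_contra! hneg
    refine ht.2 ?_
    have h0 : μ (Iio t) = 0 := measure_mono_null (fun s hs => (hs.trans hneg).le) hμ
    have := hw t ht.1
    rw [setIntegral_measure_zero _ h0, mul_zero] at this
    exact abs_nonpos_iff.1 this
  set x := sInf Z with hx
  have hlt : ∀ t < x, w t = 0 := by
    intro t ht
    by_contra hne
    have hxb : x ≤ t₀ := csInf_le hZbdd ⟨ht₀, hwt₀⟩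
    exact absurd (csInf_le hZbdd (show t ∈ Z from ⟨by linarith, hne⟩)) (not_le.2 ht)
  have hwx : w x = 0 := by
    have hxb : x ≤ b := (csInf_le hZbdd ⟨ht₀, hwt₀⟩).trans ht₀
    have := hw x hxb
    rw [setIntegral_eq_zero_of_forall_eq_zero (fun s hs => by simp [hlt s hs]), mul_zero] at this
    exact abs_nonpos_iff.1 this
  obtain ⟨y, hxy, hy⟩ := exists_measureReal_Ioo_le μ x (ε := 1 / (2 * (C + 1))) (by positivity)
  have hK0 : 0 ≤ K := (abs_nonneg _).trans (hK t₀ ht₀)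
  have hstep : ∀ n : ℕ, ∀ p ≤ b, p < y → |w p| ≤ K * (1 / 2) ^ n := by
    intro n
    induction n with
    | zero => intro p hp _; simpa using hK p hp
    | succ n ih =>
      intro p hp hpy
      have e : ∫ s in Iio p, |w s| ∂μ = ∫ s in Ioo x p, |w s| ∂μ := by
        refine setIntegral_eq_of_subset_of_forall_sdiff_eq_zero measurableSet_Iio
          Ioo_subset_Iio_self ?_
        rintro s ⟨hs, hs'⟩
        rcases lt_or_ge x s with h | h
        · exact absurd ⟨h, hs⟩ hs'
        · rcases h.eq_or_lt with h | h
          · simp [h, hwx]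
          · simp [hlt s h]
      have hb : ∫ s in Ioo x p, |w s| ∂μ ≤ K * (1 / 2) ^ n * μ.real (Ioo x p) := by
        refine (Real.le_norm_self _).trans ?_
        refine norm_setIntegral_le_of_norm_le_const (measure_lt_top _ _) ?_
        intro s hs
        simpa using ih s (hs.2.le.trans hp) (hs.2.trans hpy)
      have hm : μ.real (Ioo x p) ≤ 1 / (2 * (C + 1)) :=
        (measureReal_mono (Ioo_subset_Ioo_right hpy.le)).trans hy
      have hCm : C * (1 / (2 * (C + 1))) ≤ 1 / 2 := by
        rw [mul_one_div, div_le_div_iff₀ (by positivity) (by norm_num)]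
        linarith
      have hKn : 0 ≤ K * (1 / 2) ^ n := by positivity
      calc |w p| ≤ C * ∫ s in Iio p, |w s| ∂μ := hw p hp
        _ ≤ C * (K * (1 / 2) ^ n * (1 / (2 * (C + 1)))) := by
          rw [e]
          exact mul_le_mul_of_nonneg_left (hb.trans (mul_le_mul_of_nonneg_left hm hKn)) hC
        _ = K * (1 / 2) ^ n * (C * (1 / (2 * (C + 1)))) := by ring
        _ ≤ K * (1 / 2) ^ n * (1 / 2) := mul_le_mul_of_nonneg_left hCm hKn
        _ = K * (1 / 2) ^ (n + 1) := by ring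
  obtain ⟨p, hpZ, hpy⟩ := exists_lt_of_csInf_lt hZne hxy
  refine hpZ.2 ?_
  have hlim : Tendsto (fun n : ℕ => K * (1 / 2 : ℝ) ^ n) atTop (𝓝 (K * 0)) :=
    (tendsto_pow_atTop_nhds_zero_of_lt_one (by norm_num) (by norm_num)).const_mul K
  rw [mul_zero] at hlim
  exact abs_nonpos_iff.1 (ge_of_tendsto' hlim fun n => hstep n p hpZ.1 hpy)

theorem tendsto_setIntegral_Iic_nhdsLT (μ : Measure ℝ) {a : ℝ} {h : ℝ → ℝ}
    (hh : IntegrableOn h (Iio a) μ) :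
    Tendsto (fun t => ∫ s in Iic t, h s ∂μ) (𝓝[<] a) (𝓝 (∫ s in Iio a, h s ∂μ)) := by
  have key : Tendsto (fun t => ∫ s in Iio a, (Iic t).indicator h s ∂μ) (𝓝[<] a)
      (𝓝 (∫ s in Iio a, h s ∂μ)) := by
    refine tendsto_integral_filter_of_dominated_convergence (fun s => ‖h s‖) ?_ ?_ hh.norm ?_
    · exact Eventually.of_forall fun t => hh.aestronglyMeasurable.indicator measurableSet_Iic
    · exact Eventually.of_forall fun t => ae_of_all _ fun s => norm_indicator_le_norm_self _ _
    · refine (ae_restrict_iff' measurableSet_Iio).2 (ae_of_all _ fun s hs => ?_)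
      refine tendsto_const_nhds.congr' ?_
      filter_upwards [Ioo_mem_nhdsLT hs] with t ht
      rw [indicator_of_mem (show s ∈ Iic t from ht.1.le)]
  refine key.congr' ?_
  filter_upwards [self_mem_nhdsWithin] with t ht
  rw [integral_indicator measurableSet_Iic, Measure.restrict_restrict measurableSet_Iic]
  congr 2
  exact inter_eq_left.2 (Iic_subset_Iio.2 ht)

/-- The right-continuous function with value `c` at `0` and differential `-σ s dμ(s)`. -/
noncomputable def bvRight (μ : Measure ℝ) (σ c t : ℝ) : ℝ := c - σ * ∫ s in Iic t, s ∂μ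

/-- The left limits of `bvRight`. -/
noncomputable def bvLeft (μ : Measure ℝ) (σ c t : ℝ) : ℝ := c - σ * ∫ s in Iio t, s ∂μ

/-- One half of a `BV₊` pair: a finite measure on `(0, a)` and a sign `σ` for which the
associated function `bvRight` is positive up to `a`. -/
structure HalfBV (μ : Measure ℝ) (σ c a : ℝ) : Prop where
  finite : IsFiniteMeasure μ
  a_pos : 0 < a
  a_le : a ≤ 1
  supp : μ (Ioo 0 a)ᶜ = 0
  sign : σ = 1 ∨ σ = -1
  pos : ∀ t < a, 0 < bvRight μ σ c t

theorem setIntegral_Iic_eq_add (μ : Measure ℝ) [IsFiniteMeasure μ] {f : ℝ → ℝ} {t : ℝ}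
    (hf : IntegrableOn f (Iic t) μ) :
    ∫ s in Iic t, f s ∂μ = (∫ s in Iio t, f s ∂μ) + μ.real {t} * f t := by
  rw [← Iio_union_right, setIntegral_union (by simp) (measurableSet_singleton t)
    (hf.mono_set Iio_subset_Iic_self) (hf.mono_set (by simp)), integral_singleton, smul_eq_mul]

namespace HalfBV

variable {μ : Measure ℝ} {σ c a : ℝ}

theorem ae_mem (h : HalfBV μ σ c a) : ∀ᵐ s ∂μ, s ∈ Ioo 0 a := h.supp

theorem measure_Iic_zero (h : HalfBV μ σ c a) : μ (Iic 0) = 0 := by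
  refine measure_mono_null ?_ h.supp
  intro s hs hs'
  exact absurd hs'.1 (not_lt.2 hs)

theorem integrable_id (h : HalfBV μ σ c a) : Integrable (fun s : ℝ => s) μ := by
  have := h.finite
  refine Integrable.of_bound measurable_id.aestronglyMeasurable 1 ?_
  filter_upwards [h.ae_mem] with s hs
  rw [Real.norm_eq_abs, abs_of_pos hs.1]
  exact hs.2.le.trans h.a_le

theorem setIntegral_id_mono (h : HalfBV μ σ c a) {S T : Set ℝ} (hST : S ⊆ T) :
    ∫ s in S, s ∂μ ≤ ∫ s in T, s ∂μ := by
  refine setIntegral_mono_set h.integrable_id.integrableOn ?_ hST.eventuallyLE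
  refine ae_restrict_of_ae ?_
  filter_upwards [h.ae_mem] with s hs using hs.1.le

theorem measurable_bvRight (h : HalfBV μ σ c a) : Measurable (bvRight μ σ c) := by
  have : Monotone fun t => ∫ s in Iic t, s ∂μ := fun x y hxy =>
    h.setIntegral_id_mono (Iic_subset_Iic.2 hxy)
  exact measurable_const.sub (this.measurable.const_mul σ)

theorem measurable_bvLeft (h : HalfBV μ σ c a) : Measurable (bvLeft μ σ c) := by
  have : Monotone fun t => ∫ s in Iio t, s ∂μ := fun x y hxy =>
    h.setIntegral_id_mono (Iio_subset_Iio hxy)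
  exact measurable_const.sub (this.measurable.const_mul σ)

theorem bvRight_of_nonpos (h : HalfBV μ σ c a) {t : ℝ} (ht : t ≤ 0) : bvRight μ σ c t = c := by
  rw [bvRight, setIntegral_measure_zero _ (measure_mono_null (Iic_subset_Iic.2 ht)
    h.measure_Iic_zero), mul_zero, sub_zero]

theorem c_pos (h : HalfBV μ σ c a) : 0 < c := by
  have := h.pos 0 h.a_pos
  rwa [h.bvRight_of_nonpos le_rfl] at this

theorem bvLeft_eq (h : HalfBV μ σ c a) (t : ℝ) :
    bvLeft μ σ c t = bvRight μ σ c t + σ * (μ.real {t} * t) := by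
  have := h.finite
  rw [bvLeft, bvRight, setIntegral_Iic_eq_add μ h.integrable_id.integrableOn]
  ring

theorem le_bvRight_of_neg (h : HalfBV μ (-1) c a) (t : ℝ) :
    c ≤ bvRight μ (-1) c t ∧ c ≤ bvLeft μ (-1) c t := by
  have h0 := fun T => h.setIntegral_id_mono (empty_subset T)
  simp only [Measure.restrict_empty, integral_zero_measure] at h0
  have h1 := h0 (Iic t)
  have h2 := h0 (Iio t)
  constructor <;> simp only [bvRight, bvLeft] <;> linarith

theorem bvRight_le_of_pos (h : HalfBV μ 1 c a) {s t : ℝ} (hst : s ≤ t) :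
    bvRight μ 1 c t ≤ bvRight μ 1 c s ∧ bvRight μ 1 c t ≤ bvLeft μ 1 c s := by
  have h1 := h.setIntegral_id_mono (Iic_subset_Iic.2 hst)
  have h2 := h.setIntegral_id_mono (Iio_subset_Iic_self.trans (Iic_subset_Iic.2 hst))
  constructor <;> simp only [bvRight, bvLeft] <;> linarith

theorem exists_le (h : HalfBV μ σ c a) {t : ℝ} (ht : t < a) :
    ∃ k > 0, ∀ s ≤ t, k ≤ bvRight μ σ c s ∧ k ≤ bvLeft μ σ c s := by
  rcases h.sign with rfl | rfl
  · exact ⟨bvRight μ 1 c t, h.pos t ht, fun s hs => h.bvRight_le_of_pos hs⟩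
  · exact ⟨c, h.c_pos, fun s _ => h.le_bvRight_of_neg s⟩

theorem bvLeft_pos (h : HalfBV μ σ c a) {t : ℝ} (ht : t < a) : 0 < bvLeft μ σ c t := by
  obtain ⟨k, hk, hb⟩ := h.exists_le ht
  exact hk.trans_le (hb t le_rfl).2

theorem abs_sign (h : HalfBV μ σ c a) : |σ| = 1 := by
  rcases h.sign with rfl | rfl <;> simp

theorem integrableOn_div (h : HalfBV μ σ c a) {g : ℝ → ℝ} (hg : Continuous g) {S : Set ℝ}
    (hS : MeasurableSet S) {k : ℝ} (hk : 0 < k)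
    (hb : ∀ s ∈ S, k ≤ bvRight μ σ c s ∧ k ≤ bvLeft μ σ c s) :
    IntegrableOn (fun s => g s / (bvRight μ σ c s * bvLeft μ σ c s)) S μ := by
  have := h.finite
  obtain ⟨M, hM⟩ := isCompact_Icc.exists_bound_of_continuousOn (s := Icc 0 a) hg.continuousOn
  refine Integrable.of_bound (hg.measurable.div
    (h.measurable_bvRight.mul h.measurable_bvLeft)).aestronglyMeasurable (M / (k * k)) ?_
  filter_upwards [ae_restrict_of_ae h.ae_mem, ae_restrict_mem hS] with s hs hsS
  obtain ⟨h1, h2⟩ := hb s hsS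
  have h3 : k * k ≤ bvRight μ σ c s * bvLeft μ σ c s :=
    mul_le_mul h1 h2 hk.le (hk.le.trans h1)
  have h4 := hM s (Ioo_subset_Icc_self hs)
  rw [norm_div, Real.norm_eq_abs (_ * _), abs_of_pos (lt_of_lt_of_le (by positivity) h3)]
  exact div_le_div₀ ((norm_nonneg _).trans h4) h4 (by positivity) h3

theorem integrableOn_Iic_div (h : HalfBV μ σ c a) {g : ℝ → ℝ} (hg : Continuous g) {t : ℝ}
    (ht : t < a) :
    IntegrableOn (fun s => g s / (bvRight μ σ c s * bvLeft μ σ c s)) (Iic t) μ := by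
  obtain ⟨k, hk, hb⟩ := h.exists_le ht
  exact h.integrableOn_div hg measurableSet_Iic hk hb

theorem integrableOn_of_continuousOn (h : HalfBV μ σ c a) {f : ℝ → ℝ}
    (hf : ContinuousOn f (Ico 0 a)) {t : ℝ} (ht : t < a) : IntegrableOn f (Iic t) μ := by
  have := h.finite
  have h1 : IntegrableOn f (Icc 0 t) μ :=
    (hf.mono fun s hs => ⟨hs.1, hs.2.trans_lt ht⟩).integrableOn_compact isCompact_Icc
  have h2 : IntegrableOn f (Iic 0) μ := by
    rw [IntegrableOn, Measure.restrict_eq_zero.2 h.measure_Iic_zero]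
    exact integrable_zero_measure
  refine (h2.union h1).mono_set fun s hs => ?_
  rcases le_total s 0 with h0 | h0
  · exact Or.inl h0
  · exact Or.inr ⟨h0, hs⟩

/-- Integration by parts against `bvRight`. -/
theorem bvRight_mul_integral (h : HalfBV μ σ c a) {u : ℝ → ℝ} {t : ℝ}
    (hu : IntegrableOn u (Iic t) μ) :
    IntegrableOn (fun s => bvLeft μ σ c s * u s - σ * s * ∫ x in Iic s, u x ∂μ) (Iic t) μ ∧
    bvRight μ σ c t * ∫ s in Iic t, u s ∂μ =
      ∫ s in Iic t, (bvLeft μ σ c s * u s - σ * s * ∫ x in Iic s, u x ∂μ) ∂μ := by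
  have := h.finite
  have hid : IntegrableOn (fun s : ℝ => s) (Iic t) μ := h.integrable_id.integrableOn
  obtain ⟨i1, i2, e⟩ := integral_mul_integral_eq_add (μ.restrict (Iic t)) hid hu
  have j := ((hu.const_mul c).sub (i1.const_mul σ)).sub (i2.const_mul σ)
  have hcongr : (fun s => c * u s - σ * ((∫ x in Iio s, x ∂μ.restrict (Iic t)) * u s)
        - σ * (s * ∫ x in Iic s, u x ∂μ.restrict (Iic t))) =ᵐ[μ.restrict (Iic t)]
      fun s => bvLeft μ σ c s * u s - σ * s * ∫ x in Iic s, u x ∂μ := by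
    filter_upwards [ae_restrict_mem measurableSet_Iic] with s hs
    have e1 : Iio s ∩ Iic t = Iio s := inter_eq_left.2 (Iio_subset_Iic hs)
    have e2 : Iic s ∩ Iic t = Iic s := inter_eq_left.2 (Iic_subset_Iic.2 hs)
    rw [Measure.restrict_restrict measurableSet_Iio, Measure.restrict_restrict measurableSet_Iic,
      e1, e2, bvLeft]
    ring
  refine ⟨j.congr hcongr, ?_⟩
  have e1 := integral_sub ((hu.const_mul c).sub (i1.const_mul σ)) (i2.const_mul σ)
  have e2 := integral_sub (hu.const_mul c) (i1.const_mul σ)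
  simp only [Pi.sub_apply] at e1
  rw [← integral_congr_ae hcongr, e1, e2, integral_const_mul,
    integral_const_mul, integral_const_mul, bvRight, sub_mul, mul_assoc, e]
  ring

theorem inv_bvRight (h : HalfBV μ σ c a) {t : ℝ} (ht : t < a) :
    (bvRight μ σ c t)⁻¹ =
      c⁻¹ + σ * ∫ s in Iic t, s / (bvRight μ σ c s * bvLeft μ σ c s) ∂μ := by
  have := h.finite
  have hc := h.c_pos
  set H : ℝ → ℝ := fun t => ∫ s in Iic t, s / (bvRight μ σ c s * bvLeft μ σ c s) ∂μ with hH
  set w : ℝ → ℝ := fun t => (bvRight μ σ c t)⁻¹ - c⁻¹ - σ * H t with hw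
  obtain ⟨k, hk, hb⟩ := h.exists_le ht
  have hqi : ∀ s ≤ t, IntegrableOn
      (fun s => s / (bvRight μ σ c s * bvLeft μ σ c s)) (Iic s) μ := fun s hs =>
    h.integrableOn_Iic_div continuous_id (hs.trans_lt ht)
  have hp : ∀ s ≤ t, IntegrableOn (fun x => x * w x) (Iic s) μ ∧
      bvRight μ σ c s * w s = -σ * ∫ x in Iic s, x * w x ∂μ := by
    intro s hs
    obtain ⟨i, e⟩ := h.bvRight_mul_integral (hqi s hs)
    have hid : IntegrableOn (fun s : ℝ => s) (Iic s) μ := h.integrable_id.integrableOn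
    have hcongr : (fun x => bvLeft μ σ c x * (x / (bvRight μ σ c x * bvLeft μ σ c x))
        - σ * x * H x) =ᵐ[μ.restrict (Iic s)] fun x => x * w x + c⁻¹ * x := by
      filter_upwards [ae_restrict_of_ae h.ae_mem] with x hx
      have hR := (h.pos x hx.2).ne'
      have hL := (h.bvLeft_pos hx.2).ne'
      simp only [hw]
      field_simp
      ring
    have iw : IntegrableOn (fun x => x * w x) (Iic s) μ := by
      refine ((i.congr hcongr).sub (hid.const_mul c⁻¹)).congr (ae_of_all _ fun x => ?_)
      simp
    refine ⟨iw, ?_⟩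
    rw [integral_congr_ae hcongr, integral_add iw (hid.const_mul c⁻¹), integral_const_mul] at e
    have hR := (h.pos s (hs.trans_lt ht)).ne'
    have e3 : bvRight μ σ c s * w s = 1 - bvRight μ σ c s * c⁻¹ - σ * (bvRight μ σ c s * H s) := by
      simp only [hw]
      field_simp
    rw [e3, e]
    have e4 : bvRight μ σ c s = c - σ * ∫ x in Iic s, x ∂μ := rfl
    rcases h.sign with rfl | rfl <;> rw [e4] <;> field_simp <;> ring
  have hw0 : ∀ s ≤ t, s ≤ 0 → w s = 0 := by
    intro s hs hs0
    have e := (hp s hs).2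
    rw [setIntegral_measure_zero _ (measure_mono_null (Iic_subset_Iic.2 hs0) h.measure_Iic_zero),
      mul_zero] at e
    exact (mul_eq_zero.1 e).resolve_left (h.pos s (hs.trans_lt ht)).ne'
  have hleft : ∀ s ≤ t, |s * w s| ≤ k⁻¹ * ∫ x in Iio s, |x * w x| ∂μ := by
    intro s hs
    obtain ⟨i, e⟩ := hp s hs
    have e1 : bvLeft μ σ c s * w s = -σ * ∫ x in Iio s, x * w x ∂μ := by
      rw [setIntegral_Iic_eq_add μ i] at e
      rw [h.bvLeft_eq]
      linear_combination e
    have hL := h.bvLeft_pos (hs.trans_lt ht)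
    have e2 : |w s| ≤ k⁻¹ * ∫ x in Iio s, |x * w x| ∂μ := by
      have e3 : bvLeft μ σ c s * |w s| ≤ ∫ x in Iio s, |x * w x| ∂μ := by
        rw [← abs_of_pos hL, ← abs_mul, e1, abs_mul, abs_neg, h.abs_sign, one_mul]
        exact norm_integral_le_integral_norm (fun x => x * w x)
      rw [inv_mul_eq_div, le_div_iff₀' hk]
      exact (mul_le_mul_of_nonneg_right (hb s hs).2 (abs_nonneg _)).trans e3
    rcases le_total s 0 with h0 | h0
    · have : 0 ≤ ∫ x in Iio s, |x * w x| ∂μ := integral_nonneg fun x => abs_nonneg _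
      rw [hw0 s hs h0, mul_zero, abs_zero]
      positivity
    · rw [abs_mul, abs_of_nonneg h0]
      exact (mul_le_of_le_one_left (abs_nonneg _)
        (hs.trans (ht.le.trans h.a_le))).trans e2
  obtain ⟨K, hK⟩ : ∃ K, ∀ s ≤ t, |w s| ≤ K := by
    refine ⟨k⁻¹ + c⁻¹ + ∫ s in Iic t, ‖s / (bvRight μ σ c s * bvLeft μ σ c s)‖ ∂μ, ?_⟩
    intro s hs
    have h1 : |(bvRight μ σ c s)⁻¹| ≤ k⁻¹ := by
      rw [abs_of_pos (inv_pos.2 (h.pos s (hs.trans_lt ht)))]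
      exact inv_anti₀ hk (hb s hs).1
    have h2 : |σ * H s| ≤ ∫ s in Iic t, ‖s / (bvRight μ σ c s * bvLeft μ σ c s)‖ ∂μ := by
      rw [abs_mul, h.abs_sign, one_mul]
      refine (norm_integral_le_integral_norm
        (fun s => s / (bvRight μ σ c s * bvLeft μ σ c s))).trans ?_
      exact setIntegral_mono_set (hqi t le_rfl).norm (ae_of_all _ fun _ => norm_nonneg _)
        (Iic_subset_Iic.2 hs).eventuallyLE
    have h3 : |c⁻¹| = c⁻¹ := abs_of_pos (inv_pos.2 hc)
    calc |w s| ≤ |(bvRight μ σ c s)⁻¹ - c⁻¹| + |σ * H s| := abs_sub _ _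
      _ ≤ |(bvRight μ σ c s)⁻¹| + |c⁻¹| + |σ * H s| := by gcongr; exact abs_sub _ _
      _ ≤ _ := by rw [h3]; gcongr
  have hv : ∀ s ≤ t, |s * w s| ≤ K := by
    intro s hs
    rcases le_total s 0 with h0 | h0
    · rw [hw0 s hs h0, mul_zero, abs_zero]
      exact (abs_nonneg _).trans (hK s hs)
    · rw [abs_mul, abs_of_nonneg h0]
      exact (mul_le_of_le_one_left (abs_nonneg _)
        (hs.trans (ht.le.trans h.a_le))).trans (hK s hs)
  have hzero := eq_zero_of_abs_le_integral_Iio μ h.measure_Iic_zero (inv_nonneg.2 hk.le) hv hleft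
  have e := (hp t le_rfl).2
  rw [setIntegral_eq_zero_of_forall_eq_zero (t := Iic t) (fun s hs => hzero s hs), mul_zero] at e
  have hwt : w t = 0 := (mul_eq_zero.1 e).resolve_left (h.pos t ht).ne'
  simp only [hw] at hwt
  linarith

theorem continuousOn_kernel_of_continuous (h : HalfBV μ σ c a) {f q : ℝ → ℝ} (hf : Continuous f)
    {b : ℝ} (hq : IntegrableOn q (Iic b) μ) :
    ContinuousOn (fun t => ∫ s in Iic t, (t * f s - s * f t) * q s ∂μ) (Icc 0 b) := by
  obtain ⟨M, hM⟩ := isCompact_Icc.exists_bound_of_continuousOn (s := Icc 0 b) hf.continuousOn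
  have key : ContinuousOn
      (fun t => ∫ s in Iic b, (max t s * f s - s * f (max t s)) * q s ∂μ) (Icc 0 b) := by
    refine continuousOn_of_dominated (bound := fun s => (b * M + b * M) * ‖q s‖) ?_ ?_
      (hq.norm.const_mul _) ?_
    · intro t _
      refine AEStronglyMeasurable.mul (Continuous.aestronglyMeasurable ?_) hq.aestronglyMeasurable
      fun_prop
    · intro t ht
      filter_upwards [ae_restrict_of_ae h.ae_mem, ae_restrict_mem measurableSet_Iic] with s hs hsb
      rw [norm_mul]
      refine mul_le_mul_of_nonneg_right ?_ (norm_nonneg _)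
      have hs' : s ∈ Icc 0 b := ⟨hs.1.le, hsb⟩
      have hm : max t s ∈ Icc 0 b := ⟨le_max_of_le_left ht.1, max_le ht.2 hsb⟩
      have hb : 0 ≤ b := ht.1.trans ht.2
      have n : ∀ x ∈ Icc 0 b, ‖x‖ ≤ b := fun x hx => by
        rw [Real.norm_eq_abs, abs_of_nonneg hx.1]
        exact hx.2
      refine (norm_sub_le _ _).trans (add_le_add ?_ ?_) <;> rw [norm_mul]
      · exact mul_le_mul (n _ hm) (hM _ hs') (norm_nonneg _) hb
      · exact mul_le_mul (n _ hs') (hM _ hm) (norm_nonneg _) hb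
    · refine ae_of_all _ fun s => Continuous.continuousOn ?_
      fun_prop
  refine key.congr fun t ht => ?_
  beta_reduce
  rw [setIntegral_eq_of_subset_of_forall_sdiff_eq_zero measurableSet_Iic (Iic_subset_Iic.2 ht.2)]
  · refine setIntegral_congr_fun measurableSet_Iic fun s hs => ?_
    simp only [max_eq_left (show s ≤ t from hs)]
  · rintro s ⟨_, hs⟩
    rw [max_eq_right (not_le.1 hs).le]
    ring

theorem continuousOn_kernel (h : HalfBV μ σ c a) {f q : ℝ → ℝ} (hf : ContinuousOn f (Ico 0 a))
    (hq : ∀ t < a, IntegrableOn q (Iic t) μ) :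
    ContinuousOn (fun t => ∫ s in Iic t, (t * f s - s * f t) * q s ∂μ) (Ico 0 a) := by
  intro t ht
  obtain ⟨b, htb, hba⟩ := exists_between ht.2
  have h0b : 0 ≤ b := ht.1.trans htb.le
  have hf' : Continuous (IccExtend h0b ((Icc 0 b).domRestrict f)) :=
    (continuousOn_iff_continuous_domRestrict.1
      (hf.mono fun s hs => ⟨hs.1, hs.2.trans_lt hba⟩)).Icc_extend'
  have hcont := h.continuousOn_kernel_of_continuous hf' (hq b hba)
  have hcongr : ContinuousOn (fun t => ∫ s in Iic t, (t * f s - s * f t) * q s ∂μ) (Icc 0 b) := by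
    refine hcont.congr fun x hx => integral_congr_ae ?_
    filter_upwards [ae_restrict_of_ae h.ae_mem, ae_restrict_mem measurableSet_Iic] with s hs hsx
    rw [IccExtend_of_mem h0b _ hx, IccExtend_of_mem h0b _ ⟨hs.1.le, le_trans hsx hx.2⟩]
    rfl
  refine (hcongr t ⟨ht.1, htb.le⟩).mono_of_mem_nhdsWithin ?_
  filter_upwards [self_mem_nhdsWithin, mem_nhdsWithin_of_mem_nhds (Iio_mem_nhds htb)] with s h1 h2
  exact ⟨h1.1, h2.le⟩

end HalfBV

/-- The transform attached to one half of a `BV₊` pair. -/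
noncomputable def halfTransform (μ : Measure ℝ) (σ c : ℝ) (f : ℝ → ℝ) (t : ℝ) : ℝ :=
  bvRight μ σ c t * f t + t * (σ * ∫ s in Iic t, f s ∂μ)

/-- The inverse of `halfTransform`. -/
noncomputable def halfInverse (μ : Measure ℝ) (σ c : ℝ) (g : ℝ → ℝ) (t : ℝ) : ℝ :=
  g t / bvRight μ σ c t - t * (σ * ∫ s in Iic t, g s / (bvRight μ σ c s * bvLeft μ σ c s) ∂μ)

namespace HalfBV

variable {μ : Measure ℝ} {σ c a : ℝ}

theorem continuousOn_halfTransform (h : HalfBV μ σ c a) {f : ℝ → ℝ}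
    (hf : ContinuousOn f (Ico 0 a)) : ContinuousOn (halfTransform μ σ c f) (Ico 0 a) := by
  have := h.finite
  have hk := h.continuousOn_kernel hf (q := fun _ => 1) fun t _ => integrableOn_const
  refine ((hf.const_mul c).add (hk.const_mul σ)).congr fun t ht => ?_
  have hfi := h.integrableOn_of_continuousOn hf ht.2
  simp only [mul_one, Pi.add_apply]
  rw [integral_sub (hfi.const_mul t) (h.integrable_id.integrableOn.mul_const (f t)),
    integral_const_mul, integral_mul_const, halfTransform, bvRight]
  ring

theorem continuousOn_halfInverse (h : HalfBV μ σ c a) {g : ℝ → ℝ}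
    (hg : Continuous g) : ContinuousOn (halfInverse μ σ c g) (Ico 0 a) := by
  have hk := h.continuousOn_kernel hg.continuousOn
    (q := fun s => 1 / (bvRight μ σ c s * bvLeft μ σ c s)) fun t ht =>
      h.integrableOn_Iic_div continuous_const ht
  refine ((hg.continuousOn.const_mul c⁻¹).sub (hk.const_mul σ)).congr fun t ht => ?_
  have h1 := h.integrableOn_Iic_div hg ht.2
  have h2 : IntegrableOn (fun s => s / (bvRight μ σ c s * bvLeft μ σ c s)) (Iic t) μ :=
    h.integrableOn_Iic_div continuous_id ht.2
  have e : ∀ s, (t * g s - s * g t) * (1 / (bvRight μ σ c s * bvLeft μ σ c s)) =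
      t * (g s / (bvRight μ σ c s * bvLeft μ σ c s)) -
        s / (bvRight μ σ c s * bvLeft μ σ c s) * g t := fun s => by ring
  simp only [e, Pi.sub_apply]
  rw [integral_sub (h1.const_mul t) (h2.mul_const (g t)),
    integral_const_mul, integral_mul_const, halfInverse, div_eq_mul_inv, h.inv_bvRight ht.2]
  ring

theorem eq_zero_of_halfTransform_eq_zero (h : HalfBV μ σ c a) {f : ℝ → ℝ}
    (hf : ContinuousOn f (Ico 0 a)) (h0 : ∀ t ∈ Ico 0 a, halfTransform μ σ c f t = 0) :
    ∀ t ∈ Ico 0 a, f t = 0 := by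
  have := h.finite
  intro t ht
  obtain ⟨k, hk, hb⟩ := h.exists_le ht.2
  obtain ⟨K, hK⟩ := isCompact_Icc.exists_bound_of_continuousOn (s := Icc 0 t)
    (hf.mono fun s hs => ⟨hs.1, hs.2.trans_lt ht.2⟩)
  have hK0 : 0 ≤ K := (norm_nonneg _).trans (hK t ⟨ht.1, le_rfl⟩)
  have hwf : ∀ s, ∫ x in Iio s, |(Ici 0).indicator f x| ∂μ = ∫ x in Iio s, |f x| ∂μ := by
    intro s
    refine integral_congr_ae ?_
    filter_upwards [ae_restrict_of_ae h.ae_mem] with x hx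
    rw [indicator_of_mem (show x ∈ Ici 0 from hx.1.le)]
  have hmain : ∀ s ≤ t, |(Ici 0).indicator f s| ≤
      k⁻¹ * ∫ x in Iio s, |(Ici 0).indicator f x| ∂μ := by
    intro s hs
    have hnn : 0 ≤ ∫ x in Iio s, |(Ici 0).indicator f x| ∂μ :=
      integral_nonneg fun x => abs_nonneg _
    rcases lt_or_ge s 0 with hs0 | hs0
    · rw [indicator_of_notMem (show s ∉ Ici 0 from not_le.2 hs0), abs_zero]
      positivity
    have hsa := hs.trans_lt ht.2
    have e := h0 s ⟨hs0, hsa⟩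
    rw [halfTransform, setIntegral_Iic_eq_add μ (h.integrableOn_of_continuousOn hf hsa)] at e
    have hL := h.bvLeft_pos hsa
    have e1 : bvLeft μ σ c s * f s = -(s * (σ * ∫ x in Iio s, f x ∂μ)) := by
      rw [h.bvLeft_eq]
      linear_combination e
    have e3 : bvLeft μ σ c s * |f s| ≤ ∫ x in Iio s, |f x| ∂μ := by
      rw [← abs_of_pos hL, ← abs_mul, e1, abs_neg, abs_mul, abs_mul, h.abs_sign, one_mul,
        abs_of_nonneg hs0]
      exact (mul_le_of_le_one_left (abs_nonneg _) (hsa.le.trans h.a_le)).trans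
        (norm_integral_le_integral_norm f)
    rw [hwf, indicator_of_mem (show s ∈ Ici 0 from hs0), inv_mul_eq_div, le_div_iff₀' hk]
    exact (mul_le_mul_of_nonneg_right (hb s hs).2 (abs_nonneg _)).trans e3
  have hKi : ∀ s ≤ t, |(Ici 0).indicator f s| ≤ K := by
    intro s hs
    rcases lt_or_ge s 0 with hs0 | hs0
    · rwa [indicator_of_notMem (show s ∉ Ici 0 from not_le.2 hs0), abs_zero]
    · rw [indicator_of_mem (show s ∈ Ici 0 from hs0)]
      exact hK s ⟨hs0, hs⟩
  have := eq_zero_of_abs_le_integral_Iio μ h.measure_Iic_zero (inv_nonneg.2 hk.le) hKi hmain t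
    le_rfl
  rwa [indicator_of_mem (show t ∈ Ici 0 from ht.1)] at this

theorem integral_halfInverse (h : HalfBV μ σ c a) {g : ℝ → ℝ} (hg : Continuous g) {t : ℝ}
    (ht : t < a) :
    ∫ s in Iic t, halfInverse μ σ c g s ∂μ =
      bvRight μ σ c t * ∫ s in Iic t, g s / (bvRight μ σ c s * bvLeft μ σ c s) ∂μ := by
  rw [(h.bvRight_mul_integral (h.integrableOn_Iic_div hg ht)).2]
  refine integral_congr_ae ?_
  filter_upwards [ae_restrict_of_ae h.ae_mem] with x hx
  have hR := (h.pos x hx.2).ne'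
  have hL := (h.bvLeft_pos hx.2).ne'
  rw [halfInverse]
  field_simp

theorem halfTransform_halfInverse (h : HalfBV μ σ c a) {g : ℝ → ℝ} (hg : Continuous g) {t : ℝ}
    (ht : t < a) : halfTransform μ σ c (halfInverse μ σ c g) t = g t := by
  have hR := (h.pos t ht).ne'
  rw [halfTransform, h.integral_halfInverse hg ht, halfInverse]
  field_simp
  ring

theorem tendsto_bvRight (h : HalfBV μ σ c a) :
    Tendsto (bvRight μ σ c) (𝓝[<] a) (𝓝 (c - σ * ∫ s in Iio a, s ∂μ)) :=
  ((tendsto_setIntegral_Iic_nhdsLT μ h.integrable_id.integrableOn).const_mul σ).const_sub c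

/-- If the function `bvRight` is bounded away from zero, the primitive of the inverse transform
converges by dominated convergence. -/
theorem exists_tendsto_of_le (h : HalfBV μ σ c a) {g : ℝ → ℝ} (hg : Continuous g) {k : ℝ}
    (hk : 0 < k) (hb : ∀ s < a, k ≤ bvRight μ σ c s ∧ k ≤ bvLeft μ σ c s) :
    ∃ L, Tendsto (fun t => bvRight μ σ c t *
      ∫ s in Iic t, g s / (bvRight μ σ c s * bvLeft μ σ c s) ∂μ) (𝓝[<] a) (𝓝 L) :=
  ⟨_, h.tendsto_bvRight.mul (tendsto_setIntegral_Iic_nhdsLT μ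
    (h.integrableOn_div hg measurableSet_Iio hk fun s hs => hb s hs))⟩

/-- If the function `bvRight` decreases to zero, the primitive of the inverse transform of `g`
converges to `g a / a`. -/
theorem tendsto_of_tendsto_zero (h : HalfBV μ 1 c a) {g : ℝ → ℝ} (hg : Continuous g)
    (h0 : Tendsto (bvRight μ 1 c) (𝓝[<] a) (𝓝 0)) :
    Tendsto (fun t => bvRight μ 1 c t *
      ∫ s in Iic t, g s / (bvRight μ 1 c s * bvLeft μ 1 c s) ∂μ) (𝓝[<] a) (𝓝 (g a / a)) := by
  have ha := h.a_pos
  have hc := h.c_pos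
  set k := g a / a with hk
  set q : ℝ → ℝ := fun s => bvRight μ 1 c s * bvLeft μ 1 c s with hq
  have hqpos : ∀ s < a, 0 < q s := fun s hs => mul_pos (h.pos s hs) (h.bvLeft_pos hs)
  have hdc : Continuous fun s => g s - k * s := hg.sub (continuous_id.const_mul k)
  refine Metric.tendsto_nhds.2 fun ε hε => ?_
  have hnear : ∀ᶠ s in 𝓝 a, |g s - k * s| < ε / 2 * (a / 2) := by
    have : Tendsto (fun s => |g s - k * s|) (𝓝 a) (𝓝 |g a - k * a|) := hdc.abs.tendsto a
    rw [hk, div_mul_cancel₀ _ ha.ne', sub_self, abs_zero] at this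
    exact (tendsto_order.1 this).2 _ (by positivity)
  obtain ⟨l, u, ⟨hla, hau⟩, hlu⟩ := mem_nhds_iff_exists_Ioo_subset.1 hnear
  obtain ⟨b, hb, hba⟩ := exists_between (max_lt hla (half_lt_self ha))
  have hbound : ∀ s ∈ Ioo b a, |g s - k * s| ≤ ε / 2 * s := by
    intro s hs
    have h1 : s ∈ Ioo l u :=
      ⟨((le_max_left _ _).trans_lt hb).trans hs.1, hs.2.trans hau⟩
    have h2 : a / 2 ≤ s := (((le_max_right _ _).trans_lt hb).trans hs.1).le
    exact (show |g s - k * s| < ε / 2 * (a / 2) from hlu h1).le.trans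
      (mul_le_mul_of_nonneg_left h2 (by positivity))
  set D := |∫ s in Iic b, (g s - k * s) / q s ∂μ| + |k| * c⁻¹ with hD
  have hsmall : ∀ᶠ t in 𝓝[<] a, bvRight μ 1 c t * D < ε / 2 := by
    have : Tendsto (fun t => bvRight μ 1 c t * D) (𝓝[<] a) (𝓝 (0 * D)) := h0.mul_const D
    rw [zero_mul] at this
    exact (tendsto_order.1 this).2 _ (by positivity)
  filter_upwards [hsmall, Ioo_mem_nhdsLT hba] with t ht hbt
  have hR := h.pos t hbt.2
  have i2 : IntegrableOn (fun s => s / q s) (Iic t) μ :=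
    h.integrableOn_Iic_div continuous_id hbt.2
  have i3 : IntegrableOn (fun s => (g s - k * s) / q s) (Iic t) μ := h.integrableOn_Iic_div hdc hbt.2
  have hsub : Ioc b t ⊆ Iic t := Ioc_subset_Iic_self
  have hinv : (bvRight μ 1 c t)⁻¹ = c⁻¹ + 1 * ∫ s in Iic t, s / q s ∂μ := h.inv_bvRight hbt.2
  rw [one_mul] at hinv
  have e1 : ∫ s in Iic t, g s / q s ∂μ = (∫ s in Iic t, (g s - k * s) / q s ∂μ) +
      k * ((bvRight μ 1 c t)⁻¹ - c⁻¹) := by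
    rw [hinv, add_sub_cancel_left, ← integral_const_mul, ← integral_add i3 (i2.const_mul k)]
    congr 1
    funext s
    ring
  have e2 : ∫ s in Iic t, (g s - k * s) / q s ∂μ = (∫ s in Iic b, (g s - k * s) / q s ∂μ) +
      ∫ s in Ioc b t, (g s - k * s) / q s ∂μ := by
    rw [← Iic_union_Ioc_eq_Iic hbt.1.le, setIntegral_union (Iic_disjoint_Ioc le_rfl)
      measurableSet_Ioc (i3.mono_set (Iic_subset_Iic.2 hbt.1.le)) (i3.mono_set hsub)]
  have e3 : |∫ s in Ioc b t, (g s - k * s) / q s ∂μ| ≤ ε / 2 * (bvRight μ 1 c t)⁻¹ := by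
    calc |∫ s in Ioc b t, (g s - k * s) / q s ∂μ|
        ≤ ∫ s in Ioc b t, ε / 2 * (s / q s) ∂μ := by
          rw [← Real.norm_eq_abs]
          refine norm_integral_le_of_norm_le ((i2.mono_set hsub).const_mul _) ?_
          filter_upwards [ae_restrict_mem measurableSet_Ioc] with s hs
          have hsa := hs.2.trans_lt hbt.2
          rw [norm_div, Real.norm_eq_abs, Real.norm_eq_abs, abs_of_pos (hqpos s hsa),
            ← mul_div_assoc]
          exact div_le_div_of_nonneg_right (hbound s ⟨hs.1, hsa⟩) (hqpos s hsa).le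
      _ ≤ ∫ s in Iic t, ε / 2 * (s / q s) ∂μ := by
          refine setIntegral_mono_set (i2.const_mul _) ?_ hsub.eventuallyLE
          filter_upwards [ae_restrict_of_ae h.ae_mem] with s hs
          have := hs.1
          have := hqpos s hs.2
          simp only [Pi.zero_apply]
          positivity
      _ ≤ ε / 2 * (bvRight μ 1 c t)⁻¹ := by
          rw [integral_const_mul, hinv]
          have : 0 ≤ c⁻¹ := by positivity
          exact mul_le_mul_of_nonneg_left (by linarith) (by positivity)
  rw [Real.dist_eq, e1, e2]
  set A := ∫ s in Iic b, (g s - k * s) / q s ∂μ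
  set B := ∫ s in Ioc b t, (g s - k * s) / q s ∂μ
  set r := bvRight μ 1 c t
  have e4 : r * (A + B + k * (r⁻¹ - c⁻¹)) - k = r * (A - k * c⁻¹) + r * B := by
    field_simp
    ring
  rw [e4]
  have e5 : |r * B| ≤ ε / 2 := by
    rw [abs_mul, abs_of_pos hR]
    calc r * |B| ≤ r * (ε / 2 * r⁻¹) := mul_le_mul_of_nonneg_left e3 hR.le
      _ = ε / 2 := by field_simp
  have e6 : |r * (A - k * c⁻¹)| ≤ r * D := by
    rw [abs_mul, abs_of_pos hR]
    refine mul_le_mul_of_nonneg_left ((abs_sub _ _).trans ?_) hR.le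
    rw [hD, abs_mul, abs_of_pos (inv_pos.2 hc)]
  have := abs_add_le (r * (A - k * c⁻¹)) (r * B)
  linarith

theorem exists_tendsto_integral_halfInverse (h : HalfBV μ σ c a) {g : ℝ → ℝ}
    (hg : Continuous g) :
    ∃ L, Tendsto (fun t => σ * ∫ s in Iic t, halfInverse μ σ c g s ∂μ) (𝓝[<] a) (𝓝 L) := by
  suffices hs : ∃ L, Tendsto (fun t => bvRight μ σ c t *
      ∫ s in Iic t, g s / (bvRight μ σ c s * bvLeft μ σ c s) ∂μ) (𝓝[<] a) (𝓝 L) by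
    obtain ⟨L, hL⟩ := hs
    refine ⟨σ * L, (hL.const_mul σ).congr' ?_⟩
    filter_upwards [self_mem_nhdsWithin] with t ht
    rw [h.integral_halfInverse hg ht]
  rcases h.sign with rfl | rfl
  · have hlim := h.tendsto_bvRight
    set r := c - 1 * ∫ s in Iio a, s ∂μ
    have hr : ∀ s < a, r ≤ bvRight μ 1 c s ∧ r ≤ bvLeft μ 1 c s := by
      intro s hs
      refine ⟨le_of_tendsto hlim ?_, le_of_tendsto hlim ?_⟩ <;>
        filter_upwards [Ioo_mem_nhdsLT hs] with t ht
      · exact (h.bvRight_le_of_pos ht.1.le).1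
      · exact (h.bvRight_le_of_pos ht.1.le).2
    have hr0 : 0 ≤ r := by
      refine ge_of_tendsto hlim ?_
      filter_upwards [self_mem_nhdsWithin] with t ht using (h.pos t ht).le
    rcases hr0.eq_or_lt with h0 | h0
    · rw [← h0] at hlim
      exact ⟨_, h.tendsto_of_tendsto_zero hg hlim⟩
    · exact h.exists_tendsto_of_le hg h0 hr
  · exact h.exists_tendsto_of_le hg h.c_pos fun s _ => h.le_bvRight_of_neg s

theorem exists_tendsto_mul_halfInverse (h : HalfBV μ σ c a) {g : ℝ → ℝ} (hg : Continuous g) :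
    ∃ L, Tendsto (fun t => bvRight μ σ c t * halfInverse μ σ c g t) (𝓝[<] a) (𝓝 L) := by
  obtain ⟨L, hL⟩ := h.exists_tendsto_integral_halfInverse hg
  have hid : Tendsto (fun t : ℝ => t) (𝓝[<] a) (𝓝 a) := tendsto_id.mono_left nhdsWithin_le_nhds
  have hga : Tendsto g (𝓝[<] a) (𝓝 (g a)) := (hg.tendsto a).mono_left nhdsWithin_le_nhds
  refine ⟨g a - a * L, (hga.sub (hid.mul hL)).congr' ?_⟩
  filter_upwards [self_mem_nhdsWithin] with t ht
  have := h.halfTransform_halfInverse hg ht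
  rw [halfTransform] at this
  linarith

end HalfBV

namespace HalfBV

variable {μ : Measure ℝ} {σ c a : ℝ}

theorem eqOn_of_halfTransform_eq (h : HalfBV μ σ c a) {f₁ f₂ : ℝ → ℝ}
    (h₁ : ContinuousOn f₁ (Ico 0 a)) (h₂ : ContinuousOn f₂ (Ico 0 a))
    (heq : EqOn (halfTransform μ σ c f₁) (halfTransform μ σ c f₂) (Ico 0 a)) :
    EqOn f₁ f₂ (Ico 0 a) := by
  intro t ht
  refine sub_eq_zero.1 (h.eq_zero_of_halfTransform_eq_zero (h₁.sub h₂) (fun s hs => ?_) t ht)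
  have e := heq hs
  have i := integral_sub (h.integrableOn_of_continuousOn h₁ hs.2)
    (h.integrableOn_of_continuousOn h₂ hs.2)
  simp only [halfTransform, Pi.sub_apply] at e ⊢
  rw [i]
  linear_combination e

theorem setIntegral_congr (h : HalfBV μ σ c a) {f₁ f₂ : ℝ → ℝ} (heq : EqOn f₁ f₂ (Ioo 0 a))
    (t : ℝ) : ∫ s in Iic t, f₁ s ∂μ = ∫ s in Iic t, f₂ s ∂μ := by
  refine integral_congr_ae ?_
  filter_upwards [ae_restrict_of_ae h.ae_mem] with s hs using heq hs

end HalfBV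

namespace NormBV0

theorem exists_sign (P : NormBV0) {am ap : ℝ} (hBV : P.BVplusOn am ap) :
    ∃ (ν : Measure ℝ) (σ : ℝ), IsFiniteMeasure ν ∧ (σ = 1 ∨ σ = -1) ∧
      ∀ S f, P.integ S f = σ * ∫ s in S, f s ∂ν := by
  obtain ⟨hp, hm, -, hz⟩ := hBV
  have hfin : ∀ ν : Measure ℝ, ν (Ioo (-1) 1) ≠ ⊤ → ν (Ioo (-1) 1)ᶜ = 0 → IsFiniteMeasure ν := by
    intro ν h1 h2
    refine ⟨?_⟩
    rw [← measure_add_measure_compl measurableSet_Ioo, h2, add_zero]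
    exact h1.lt_top
  rcases hz with hz | hz
  · exact ⟨P.νp, 1, hfin _ hp P.supp_p, Or.inl rfl, fun S f => by simp [integ, hz]⟩
  · exact ⟨P.νm, -1, hfin _ hm P.supp_m, Or.inr rfl, fun S f => by simp [integ, hz]⟩

theorem exists_halfBV_pos (P : NormBV0) {am ap : ℝ} (h2 : am < 0) (h3 : 0 < ap) (h4 : ap ≤ 1)
    (hBV : P.BVplusOn am ap) :
    ∃ (μ : Measure ℝ) (σ : ℝ), HalfBV μ σ (P.R 0) ap ∧
      (∀ t ∈ Ico 0 ap, bvRight μ σ (P.R 0) t = P.R t) ∧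
      ∀ f, ∀ t ∈ Ico 0 ap, σ * ∫ s in Iic t, f s ∂μ = P.integ (Ioc 0 t) f := by
  obtain ⟨ν, σ, hν, hσ, hinteg⟩ := P.exists_sign hBV
  have hI : ∀ f : ℝ → ℝ, ∀ t < ap, σ * ∫ s in Iic t, f s ∂ν.restrict (Ioo 0 ap) =
      P.integ (Ioc 0 t) f := by
    intro f t ht
    have e : Iic t ∩ Ioo 0 ap = Ioc 0 t := by
      ext s
      simp only [mem_inter_iff, mem_Iic, mem_Ioo, mem_Ioc]
      exact ⟨fun h => ⟨h.2.1, h.1⟩, fun h => ⟨h.2, h.1, h.2.trans_lt ht⟩⟩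
    rw [hinteg, Measure.restrict_restrict measurableSet_Iic, e]
  have hR : ∀ t ∈ Ico 0 ap, bvRight (ν.restrict (Ioo 0 ap)) σ (P.R 0) t = P.R t := by
    intro t ht
    rw [bvRight, hI _ t ht.2, P.fund_pos t ⟨ht.1, ht.2.trans_le h4⟩, integ]
  refine ⟨ν.restrict (Ioo 0 ap), σ, ⟨inferInstance, h3, h4, ?_, hσ, ?_⟩, hR,
    fun f t ht => hI f t ht.2⟩
  · exact ae_restrict_mem measurableSet_Ioo
  · intro t ht
    rcases le_total 0 t with h0 | h0
    · rw [hR t ⟨h0, ht⟩]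
      exact hBV.2.2.1 t ⟨h2.trans_le h0, ht⟩
    · rw [bvRight, hI _ t ht, Ioc_eq_empty (not_lt.2 h0)]
      simpa [integ] using hBV.2.2.1 0 ⟨h2, h3⟩

theorem exists_halfBV_neg (P : NormBV0) {am ap : ℝ} (h1 : -1 ≤ am) (h2 : am < 0) (h3 : 0 < ap)
    (hBV : P.BVplusOn am ap) :
    ∃ (μ : Measure ℝ) (σ : ℝ), HalfBV μ σ (P.R 0) (-am) ∧
      (∀ t ∈ Ico 0 (-am), bvRight μ σ (P.R 0) t = P.R (-t)) ∧
      ∀ f, ∀ t ∈ Ico 0 (-am), σ * ∫ s in Iic t, f (-s) ∂μ = P.integ (Ico (-t) 0) f := by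
  obtain ⟨ν, σ, hν, hσ, hinteg⟩ := P.exists_sign hBV
  set μ := (ν.map Neg.neg).restrict (Ioo 0 (-am)) with hμ
  have hI : ∀ f : ℝ → ℝ, ∀ t < -am, σ * ∫ s in Iic t, f (-s) ∂μ = P.integ (Ico (-t) 0) f := by
    intro f t ht
    have e : Iic t ∩ Ioo 0 (-am) = Ioc 0 t := by
      ext s
      simp only [mem_inter_iff, mem_Iic, mem_Ioo, mem_Ioc]
      exact ⟨fun h => ⟨h.2.1, h.1⟩, fun h => ⟨h.2, h.1, h.2.trans_lt ht⟩⟩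
    have hemb : MeasurableEmbedding (Neg.neg : ℝ → ℝ) := (MeasurableEquiv.neg ℝ).measurableEmbedding
    have e' : (Neg.neg : ℝ → ℝ) ⁻¹' Ioc 0 t = Ico (-t) 0 := by
      ext s
      simp only [mem_preimage, mem_Ioc, mem_Ico]
      constructor <;> intro h <;> constructor <;> linarith [h.1, h.2]
    rw [hinteg, hμ, Measure.restrict_restrict measurableSet_Iic, e, hemb.setIntegral_map, e']
    simp only [neg_neg]
  have hR : ∀ t ∈ Ico 0 (-am), bvRight μ σ (P.R 0) t = P.R (-t) := by
    intro t ht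
    have e := hI (fun s => -s) t ht.2
    simp only [neg_neg] at e
    rw [bvRight, e, P.fund_neg (-t) ⟨by linarith [ht.2], by linarith [ht.1]⟩, integ,
      integral_neg, integral_neg]
    ring
  refine ⟨μ, σ, ⟨inferInstance, by linarith, by linarith, ?_, hσ, ?_⟩, hR,
    fun f t ht => hI f t ht.2⟩
  · exact ae_restrict_mem measurableSet_Ioo
  · intro t ht
    rcases le_total 0 t with h0 | h0
    · rw [hR t ⟨h0, ht⟩]
      exact hBV.2.2.1 (-t) ⟨by linarith, by linarith⟩
    · have e := hI (fun s => -s) t ht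
      simp only [neg_neg] at e
      rw [bvRight, e, Ico_eq_empty (by linarith)]
      simpa [integ] using hBV.2.2.1 0 ⟨h2, h3⟩

theorem T_eq_of_nonneg (P : NormBV0) {μ : Measure ℝ} {σ a : ℝ}
    (hR : ∀ t ∈ Ico 0 a, bvRight μ σ (P.R 0) t = P.R t)
    (hI : ∀ f, ∀ t ∈ Ico 0 a, σ * ∫ s in Iic t, f s ∂μ = P.integ (Ioc 0 t) f)
    (f : ℝ → ℝ) {t : ℝ} (ht : t ∈ Ico 0 a) : P.T f t = halfTransform μ σ (P.R 0) f t := by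
  rw [halfTransform, hR t ht, hI f t ht, T]
  split_ifs with h
  · rfl
  · have : t = 0 := le_antisymm (not_lt.1 h) ht.1
    simp [this]

theorem T_neg_eq_of_nonneg (P : NormBV0) {μ : Measure ℝ} {σ a : ℝ}
    (hR : ∀ t ∈ Ico 0 a, bvRight μ σ (P.R 0) t = P.R (-t))
    (hI : ∀ f, ∀ t ∈ Ico 0 a, σ * ∫ s in Iic t, f (-s) ∂μ = P.integ (Ico (-t) 0) f)
    (f : ℝ → ℝ) {t : ℝ} (ht : t ∈ Ico 0 a) :
    P.T f (-t) = halfTransform μ σ (P.R 0) (fun s => f (-s)) t := by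
  rw [halfTransform, hR t ht, hI f t ht, T, if_neg (by linarith [ht.1])]
  ring

end NormBV0

theorem continuousOn_Ioo_of_halves {f : ℝ → ℝ} {a b : ℝ} (ha : a < 0) (hb : 0 < b)
    (h₁ : ContinuousOn f (Ico 0 b)) (h₂ : ContinuousOn (fun t => f (-t)) (Ico 0 (-a))) :
    ContinuousOn f (Ioo a b) := by
  have c₁ : ContinuousOn (fun t => f (max t 0)) (Ioo a b) :=
    h₁.comp (f := fun t => max t 0) (by fun_prop) fun t ht => ⟨le_max_right _ _, max_lt ht.2 hb⟩
  have c₂ : ContinuousOn (fun t => f (-max (-t) 0)) (Ioo a b) :=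
    h₂.comp (f := fun t => max (-t) 0) (by fun_prop) fun t ht =>
      ⟨le_max_right _ _, max_lt (neg_lt_neg ht.1) (by linarith)⟩
  refine ((c₁.add c₂).sub (continuousOn_const (c := f 0))).congr fun t _ => ?_
  rcases le_total 0 t with h | h
  · simp [max_eq_left h, max_eq_right (neg_nonpos.2 h)]
  · simp [max_eq_right h, max_eq_left (neg_nonneg.2 h)]

/-- A continuous function on an open interval around `0` with limits at the end points extends
to a continuous function which is linear through the origin beyond them. -/
theorem exists_continuous_linear_extension {F : ℝ → ℝ} {a b L₁ L₂ : ℝ} (ha : a < 0) (hb : 0 < b)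
    (hF : ContinuousOn F (Ioo a b)) (h₁ : Tendsto F (𝓝[>] a) (𝓝 L₁))
    (h₂ : Tendsto F (𝓝[<] b) (𝓝 L₂)) :
    ∃ g : ℝ → ℝ, Continuous g ∧ (∀ t ∈ Ioo a b, g t = F t) ∧
      (∀ t, b ≤ t → g t = g b / b * t) ∧ ∀ t ≤ a, g t = g a / a * t := by
  have hab : a < b := ha.trans hb
  have he := continuousOn_Icc_extendFrom_Ioo hF h₁ h₂
  have hea := eq_lim_at_left_extendFrom_Ioo hab h₁
  have heb := eq_lim_at_right_extendFrom_Ioo hab h₂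
  set E := IccExtend hab.le ((Icc a b).domRestrict (extendFrom (Ioo a b) F)) with hE
  have hEc : Continuous E := (continuousOn_iff_continuous_domRestrict.1 he).Icc_extend'
  set g : ℝ → ℝ := fun t => E t + L₂ / b * (max t b - b) + L₁ / a * (min t a - a) with hg
  have hgb : ∀ t, b ≤ t → g t = L₂ / b * t := by
    intro t ht
    have : E t = L₂ := by rw [hE, IccExtend_of_right_le _ _ ht]; exact heb
    simp only [hg, this, max_eq_left ht, min_eq_right (hab.le.trans ht)]
    field_simp
    ring
  have hga : ∀ t ≤ a, g t = L₁ / a * t := by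
    intro t ht
    have : E t = L₁ := by rw [hE, IccExtend_of_le_left _ _ ht]; exact hea
    simp only [hg, this, max_eq_right (ht.trans hab.le), min_eq_left ht]
    have := ha.ne
    field_simp
    ring
  refine ⟨g, by fun_prop, fun t ht => ?_, fun t ht => ?_, fun t ht => ?_⟩
  · have : E t = F t := by
      rw [hE, IccExtend_of_mem _ _ (Ioo_subset_Icc_self ht)]
      exact extendFrom_extends hF t ht
    simp [hg, this, max_eq_right ht.2.le, min_eq_right ht.1.le]
  · rw [hgb t ht, hgb b le_rfl, div_mul_cancel₀ _ hb.ne']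
  · rw [hga t ht, hga a le_rfl, div_mul_cancel₀ _ ha.ne]

namespace NormBV0

theorem exists_preimage (P : NormBV0) {am ap : ℝ}
    (h1 : -1 ≤ am) (h2 : am < 0) (h3 : 0 < ap) (h4 : ap ≤ 1) (hBV : P.BVplusOn am ap)
    {g : ℝ → ℝ} (hg : ContinuousOn g (Icc (-1) 1)) :
    ∃ f : ℝ → ℝ, P.memDI am ap f ∧ ∀ t ∈ Ioo am ap, P.T f t = g t := by
  obtain ⟨μ, σ, h, hR, hI⟩ := P.exists_halfBV_pos h2 h3 h4 hBV
  obtain ⟨μ', σ', h', hR', hI'⟩ := P.exists_halfBV_neg h1 h2 h3 hBV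
  set G : ℝ → ℝ := IccExtend (show (-1 : ℝ) ≤ 1 by norm_num) ((Icc (-1) 1).domRestrict g)
    with hG_def
  have hG : Continuous G := (continuousOn_iff_continuous_domRestrict.1 hg).Icc_extend'
  have hGg : ∀ t ∈ Ioo am ap, G t = g t := fun t ht => by
    rw [hG_def, IccExtend_of_mem _ _ ⟨h1.trans ht.1.le, ht.2.le.trans h4⟩]
    rfl
  have hG' : Continuous fun t => G (-t) := hG.comp continuous_neg
  set u := halfInverse μ σ (P.R 0) G with hu
  set v := halfInverse μ' σ' (P.R 0) fun t => G (-t) with hv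
  set f : ℝ → ℝ := fun t => if 0 ≤ t then u t else v (-t) with hf
  have huv : u 0 = v 0 := by
    simp [hu, hv, halfInverse, h.bvRight_of_nonpos le_rfl, h'.bvRight_of_nonpos le_rfl]
  have hfu : EqOn f u (Ico 0 ap) := fun t ht => if_pos ht.1
  have hfv : EqOn (fun t => f (-t)) v (Ico 0 (-am)) := by
    intro t ht
    rcases ht.1.eq_or_lt with h0 | h0
    · simp [hf, ← h0, huv]
    · simp [hf, not_le.2 h0]
  have hfI := h.setIntegral_congr (hfu.mono Ioo_subset_Ico_self)
  have hfI' := h'.setIntegral_congr (hfv.mono Ioo_subset_Ico_self)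
  have hev : ∀ᶠ t in 𝓝[<] ap, t ∈ Ico 0 ap := by
    filter_upwards [Ioo_mem_nhdsLT h3] with t ht using Ioo_subset_Ico_self ht
  have hev' : ∀ᶠ t in 𝓝[<] (-am), t ∈ Ico 0 (-am) := by
    filter_upwards [Ioo_mem_nhdsLT (neg_pos.2 h2)] with t ht using Ioo_subset_Ico_self ht
  have hneg : Tendsto (fun t : ℝ => -t) (𝓝[>] am) (𝓝[<] (-am)) := tendsto_neg_nhdsGT
  refine ⟨f, ⟨?_, ?_, ?_, ?_, ?_⟩, ?_⟩
  · exact continuousOn_Ioo_of_halves h2 h3 ((h.continuousOn_halfInverse hG).congr hfu)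
      ((h'.continuousOn_halfInverse hG').congr hfv)
  · obtain ⟨L, hL⟩ := h.exists_tendsto_mul_halfInverse hG
    refine ⟨L, hL.congr' ?_⟩
    filter_upwards [hev] with t ht
    rw [hR t ht, hfu ht]
  · obtain ⟨L, hL⟩ := h'.exists_tendsto_mul_halfInverse hG'
    refine ⟨L, (hL.comp hneg).congr' ?_⟩
    filter_upwards [hneg.eventually hev'] with t ht
    have e := hfv ht
    simp only [neg_neg] at e
    rw [comp_apply, hR' _ ht, neg_neg, e]
  · obtain ⟨L, hL⟩ := h.exists_tendsto_integral_halfInverse hG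
    refine ⟨L, hL.congr' ?_⟩
    filter_upwards [hev] with t ht
    rw [← hI f t ht, hfI]
  · obtain ⟨L, hL⟩ := h'.exists_tendsto_integral_halfInverse hG'
    refine ⟨L, (hL.comp hneg).congr' ?_⟩
    filter_upwards [hneg.eventually hev'] with t ht
    have e := hI' f _ ht
    rw [neg_neg, hfI'] at e
    rw [comp_apply, ← e]
  · intro t ht
    rw [← hGg t ht]
    rcases le_total 0 t with h0 | h0
    · have ht' : t ∈ Ico 0 ap := ⟨h0, ht.2⟩
      rw [P.T_eq_of_nonneg hR hI f ht', halfTransform, hfI, hfu ht']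
      exact h.halfTransform_halfInverse hG ht.2
    · have ht' : -t ∈ Ico 0 (-am) := ⟨neg_nonneg.2 h0, neg_lt_neg ht.1⟩
      have e := P.T_neg_eq_of_nonneg hR' hI' f ht'
      have e2 := h'.halfTransform_halfInverse hG' ht'.2
      have e3 := hfv ht'
      simp only [neg_neg] at e e2 e3
      rw [e, halfTransform, hfI', neg_neg, e3]
      exact e2

end NormBV0

/-- For a `BV₊` pair on `I = (a₋, a₊)`, the transform of every
`f ∈ D^I_{R,ν}` has limits at `a₊⁻` and `a₋⁺`, and extending it linearly outside `I`
yields a bijection from `D^I_{R,ν}` onto the continuous functions on `[-1,1]` that are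
linear through the origin on `[a₊,1]` and on `[-1,a₋]`. -/
theorem bv0_bijection_subinterval (P : NormBV0) (am ap : ℝ)
    (h1 : -1 ≤ am) (h2 : am < 0) (h3 : 0 < ap) (h4 : ap ≤ 1)
    (hBV : P.BVplusOn am ap) :
    (∀ f : ℝ → ℝ, P.memDI am ap f →
      (∃ L : ℝ, Tendsto (P.T f) (𝓝[<] ap) (𝓝 L)) ∧
      (∃ L : ℝ, Tendsto (P.T f) (𝓝[>] am) (𝓝 L)) ∧
      (∃ g : ℝ → ℝ, ContinuousOn g (Set.Icc (-1 : ℝ) 1) ∧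
        (∀ t ∈ Set.Ioo am ap, g t = P.T f t) ∧
        (∀ t ∈ Set.Icc ap 1, g t = g ap / ap * t) ∧
        (∀ t ∈ Set.Icc (-1 : ℝ) am, g t = g am / am * t))) ∧
    (∀ f₁ f₂ : ℝ → ℝ, P.memDI am ap f₁ → P.memDI am ap f₂ →
      (∀ t ∈ Set.Ioo am ap, P.T f₁ t = P.T f₂ t) →
      ∀ t ∈ Set.Ioo am ap, f₁ t = f₂ t) ∧
    (∀ g : ℝ → ℝ, ContinuousOn g (Set.Icc (-1 : ℝ) 1) →
      (∀ t ∈ Set.Icc ap 1, g t = g ap / ap * t) →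
      (∀ t ∈ Set.Icc (-1 : ℝ) am, g t = g am / am * t) →
      ∃ f : ℝ → ℝ, P.memDI am ap f ∧ ∀ t ∈ Set.Ioo am ap, P.T f t = g t) := by
  obtain ⟨μ, σ, h, hR, hI⟩ := P.exists_halfBV_pos h2 h3 h4 hBV
  obtain ⟨μ', σ', h', hR', hI'⟩ := P.exists_halfBV_neg h1 h2 h3 hBV
  have hpos : ∀ f : ℝ → ℝ, ContinuousOn f (Ioo am ap) → ContinuousOn f (Ico 0 ap) :=
    fun f hf => hf.mono fun t ht => ⟨h2.trans_le ht.1, ht.2⟩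
  have hneg : ∀ f : ℝ → ℝ, ContinuousOn f (Ioo am ap) →
      ContinuousOn (fun t => f (-t)) (Ico 0 (-am)) := fun f hf =>
    hf.comp (f := fun t => -t) continuous_neg.continuousOn fun t ht =>
      ⟨by linarith [ht.2], by linarith [ht.1]⟩
  refine ⟨fun f hf => ?_, fun f₁ f₂ hf₁ hf₂ heq t ht => ?_,
    fun g hg _ _ => P.exists_preimage h1 h2 h3 h4 hBV hg⟩
  · obtain ⟨hfc, ⟨A, hA⟩, ⟨A', hA'⟩, ⟨B, hB⟩, ⟨B', hB'⟩⟩ := hf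
    have hp : Tendsto (P.T f) (𝓝[<] ap) (𝓝 (A + ap * B)) := by
      refine (hA.add ((tendsto_id.mono_left nhdsWithin_le_nhds).mul hB)).congr' ?_
      filter_upwards [Ioo_mem_nhdsLT h3] with t ht
      rw [NormBV0.T, if_pos ht.1, id]
    have hm : Tendsto (P.T f) (𝓝[>] am) (𝓝 (A' - am * B')) := by
      refine (hA'.sub ((tendsto_id.mono_left nhdsWithin_le_nhds).mul hB')).congr' ?_
      filter_upwards [Ioo_mem_nhdsGT h2] with t ht
      rw [NormBV0.T, if_neg ht.2.le.not_gt, id]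
    have hT : ContinuousOn (P.T f) (Ioo am ap) :=
      continuousOn_Ioo_of_halves h2 h3
        ((h.continuousOn_halfTransform (hpos f hfc)).congr fun t ht =>
          P.T_eq_of_nonneg hR hI f ht)
        ((h'.continuousOn_halfTransform (hneg f hfc)).congr fun t ht =>
          P.T_neg_eq_of_nonneg hR' hI' f ht)
    obtain ⟨g, hgc, hgT, hgp, hgm⟩ := exists_continuous_linear_extension h2 h3 hT hm hp
    exact ⟨⟨_, hp⟩, ⟨_, hm⟩, g, hgc.continuousOn, hgT, fun t ht => hgp t ht.1,
      fun t ht => hgm t ht.2⟩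
  · rcases le_total 0 t with h0 | h0
    · refine h.eqOn_of_halfTransform_eq (hpos f₁ hf₁.1) (hpos f₂ hf₂.1) (fun s hs => ?_)
        ⟨h0, ht.2⟩
      rw [← P.T_eq_of_nonneg hR hI f₁ hs, ← P.T_eq_of_nonneg hR hI f₂ hs]
      exact heq s ⟨h2.trans_le hs.1, hs.2⟩
    · have e := h'.eqOn_of_halfTransform_eq (hneg f₁ hf₁.1) (hneg f₂ hf₂.1) (fun s hs => ?_)
        (show -t ∈ Ico 0 (-am) from ⟨neg_nonneg.2 h0, neg_lt_neg ht.1⟩)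
      · simpa only [neg_neg] using e
      · rw [← P.T_neg_eq_of_nonneg hR' hI' f₁ hs, ← P.T_neg_eq_of_nonneg hR' hI' f₂ hs]
        exact heq (-s) ⟨by linarith [hs.2], by linarith [hs.1]⟩
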